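/- arXiv:1605.00978 — 2 statements merged into one kernel-verified Lean document; each statement's English description precedes it below -/
import Mathlib

section
/- For every odd integer v ≥ 9, the value semigroup {ν(f) : 0 ≠ f ∈ ℛ} of the subalgebra ℛ = ℂ[z^6, z^8+z^v] + z^{v+27}ℂ⟦z⟧ of ℂ⟦z⟧ equals the submonoid of ℕ generated by 6, 8 and v+16. -/
open PowerSeries

noncomputable section

/-- `𝒪 = ℂ⟦z⟧`, the ring of formal power series over `ℂ`. -/
abbrev 𝒪 : Type := PowerSeries ℂ

/-- `ν(f)`: the order of a power series (least `n` with nonzero coefficient);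
only meaningful for `f ≠ 0`. -/
noncomputable def ord (f : 𝒪) : ℕ := sInf {n : ℕ | PowerSeries.coeff n f ≠ 0}

/-- The value semigroup `Γ = {ν(x) : 0 ≠ x ∈ ℛ}` of a subalgebra `ℛ ⊆ 𝒪`. -/
def SGamma (R : Subalgebra ℂ 𝒪) : Set ℕ := {n | ∃ x ∈ R, x ≠ (0:𝒪) ∧ ord x = n}

/-- The set of gaps `G = ℕ ∖ Γ`. -/
def Gaps (R : Subalgebra ℂ 𝒪) : Set ℕ := (SGamma R)ᶜ

/-- `Δ` is a `Γ`-module: `Γ + Δ ⊆ Δ`. -/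
def IsGammaModule (Γ Δ : Set ℕ) : Prop := ∀ a ∈ Γ, ∀ d ∈ Δ, a + d ∈ Δ

/-- `Δ_𝓜 = {ν(x) : 0 ≠ x ∈ 𝓜}` for an `ℛ`-submodule `𝓜 ⊆ 𝒪`. -/
def DeltaM (R : Subalgebra ℂ 𝒪) (M : Submodule ↥R 𝒪) : Set ℕ :=
  {n | ∃ x ∈ M, x ≠ (0:𝒪) ∧ ord x = n}

/-- `D_𝓜 = Δ_𝓜 ∩ G`, the set of added gaps. -/
def Dset (R : Subalgebra ℂ 𝒪) (M : Submodule ↥R 𝒪) : Set ℕ := DeltaM R M ∩ Gaps R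

/-- A standard module: a finitely generated `ℛ`-submodule of `𝒪` containing an
element of order `0`. -/
def IsStd (R : Subalgebra ℂ 𝒪) (M : Submodule ↥R 𝒪) : Prop :=
  M.FG ∧ ∃ x ∈ M, x ≠ (0:𝒪) ∧ ord x = 0

/-- `c ≥ 1` is the conductor of `ℛ`: the minimal exponent with `z^c𝒪 ⊆ ℛ`. -/
def HasConductor (R : Subalgebra ℂ 𝒪) (c : ℕ) : Prop :=
  1 ≤ c ∧ (∀ f : 𝒪, (PowerSeries.X : 𝒪)^c * f ∈ R) ∧
    ∀ c' : ℕ, (∀ f : 𝒪, (PowerSeries.X : 𝒪)^c' * f ∈ R) → c ≤ c'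

/-- `z^j𝒪` as a `ℂ`-submodule of `𝒪`. -/
def zO (j : ℕ) : Submodule ℂ 𝒪 :=
  LinearMap.range (LinearMap.mulLeft ℂ ((PowerSeries.X : 𝒪)^j))

/-- `𝔪𝓜` as a `ℂ`-submodule of `𝒪`, where `𝔪 = {x ∈ ℛ : x = 0 or ν(x) > 0}`
is the maximal ideal of `ℛ`. -/
def mSmul (R : Subalgebra ℂ 𝒪) (M : Submodule ↥R 𝒪) : Submodule ℂ 𝒪 :=
  Submodule.span ℂ {z : 𝒪 | ∃ r ∈ (R : Set 𝒪), ∃ y ∈ M, (r = 0 ∨ 0 < ord r) ∧ z = r * y}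

/-- `dim_ℂ (A / B)` for `ℂ`-subspaces; intended for `B ≤ A`. -/
noncomputable def quotDim (A B : Submodule ℂ 𝒪) : ℕ :=
  Module.finrank ℂ (↥A ⧸ Submodule.comap A.subtype B)

/-- `D_i = D_0 ∪ {g_1, …, g_i}` (the gaps `g` are indexed by `1, …, m`). -/
def DFlagSet (D0 : Set ℕ) (g : ℕ → ℕ) (i : ℕ) : Set ℕ := D0 ∪ g '' Set.Icc 1 i

/-- `(D_0, …, D_m)` with `D_i = D_0 ∪ {g_1 < … < g_i}` is a `D`-flag:
all `Δ_i = Γ ∪ D_i` are `Γ`-modules. -/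
def IsDFlag (R : Subalgebra ℂ 𝒪) (m : ℕ) (D0 : Set ℕ) (g : ℕ → ℕ) : Prop :=
  D0 ⊆ Gaps R ∧ StrictMonoOn g (Set.Icc 1 m) ∧
  (∀ i, 1 ≤ i → i ≤ m → g i ∈ Gaps R \ D0) ∧
  (∀ i ≤ m, IsGammaModule (SGamma R) (SGamma R ∪ DFlagSet D0 g i))

/-- A `D`-flag is admissible if it is realized by a flag of standard modules. -/
def IsAdmissibleFlag (R : Subalgebra ℂ 𝒪) (m : ℕ) (D0 : Set ℕ) (g : ℕ → ℕ) : Prop :=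
  ∃ MM : ℕ → Submodule ↥R 𝒪, (∀ i, i < m → MM i ≤ MM (i+1)) ∧
    ∀ i ≤ m, IsStd R (MM i) ∧ Dset R (MM i) = DFlagSet D0 g i

/-- The subalgebra `ℂ[z^a, z^b + z^c] + z^N ℂ⟦z⟧` of `𝒪`. -/
def Rring (a b c N : ℕ) : Subalgebra ℂ 𝒪 where
  carrier := {f : 𝒪 | ∃ p ∈ Algebra.adjoin ℂ
      ({(PowerSeries.X : 𝒪)^a, (PowerSeries.X : 𝒪)^b + (PowerSeries.X : 𝒪)^c} : Set 𝒪),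
    ∃ g : 𝒪, f = p + (PowerSeries.X : 𝒪)^N * g}
  mul_mem' := by
    rintro x y ⟨p, hp, gx, rfl⟩ ⟨q, hq, gy, rfl⟩
    exact ⟨p * q, mul_mem hp hq,
      p * gy + gx * q + (PowerSeries.X : 𝒪)^N * (gx * gy), by ring⟩
  one_mem' := ⟨1, one_mem _, 0, by ring⟩
  add_mem' := by
    rintro x y ⟨p, hp, gx, rfl⟩ ⟨q, hq, gy, rfl⟩
    exact ⟨p + q, add_mem hp hq, gx + gy, by ring⟩
  zero_mem' := ⟨0, zero_mem _, 0, by ring⟩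
  algebraMap_mem' := fun r => ⟨algebraMap ℂ 𝒪 r, Subalgebra.algebraMap_mem _ r, 0, by ring⟩

/-- The ring `ℂ⟦z^4, z^{2u}+z^v⟧ = ℂ[z^4, z^{2u}+z^v] + z^{4u+v}ℂ⟦z⟧` for the
plane curve singularity with Puiseux exponents `(4, 2u, v)`. -/
def Rcal (u v : ℕ) : Subalgebra ℂ 𝒪 := Rring 4 (2*u) v (4*u+v)

/-- The gap counting function `γ_Δ(ℓ) = |[ℓ,∞) ∖ Δ|`. -/
noncomputable def gapCount (Δ : Set ℕ) (ℓ : ℕ) : ℕ := Set.ncard {k : ℕ | ℓ ≤ k ∧ k ∉ Δ}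

/-- `n = n(D)`: the smallest odd number in `(Δ ∪ {v}) ∩ [2u, ∞)`. -/
noncomputable def nOdd (u v : ℕ) (Δ : Set ℕ) : ℕ :=
  sInf {k : ℕ | Odd k ∧ 2*u ≤ k ∧ (k ∈ Δ ∨ k = v)}

/-- The dimension change `μ_{D,g}` of Theorem `dimprop` (for the family `(4,2u,v)`),
where `Γ` is the value semigroup. -/
noncomputable def muDim (u v : ℕ) (Γ : Set ℕ) (D : Set ℕ) (gp : ℕ) : ℕ :=
  let Δ : Set ℕ := Γ ∪ D
  let Δ' : Set ℕ := Δ ∪ {gp}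
  let n : ℕ := nOdd u v Δ
  if gp % 4 = 2 then
    (gapCount Δ' gp - gapCount Δ' (gp+4)) - (gapCount Δ' (gp+n) - gapCount Δ' (gp+4+n))
  else gapCount Δ' gp - gapCount Δ' (gp+4)


/-- `f` has order `n`, in factorized form. -/
def HasOrd16 (f : 𝒪) (n : ℕ) : Prop :=
  ∃ u : 𝒪, PowerSeries.constantCoeff u ≠ 0 ∧ f = (PowerSeries.X : 𝒪)^n * u

lemma HasOrd16.mul {f g : 𝒪} {m n : ℕ} (hf : HasOrd16 f m) (hg : HasOrd16 g n) :
    HasOrd16 (f * g) (m + n) := by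
  obtain ⟨u, hu, rfl⟩ := hf
  obtain ⟨w, hw, rfl⟩ := hg
  exact ⟨u * w, by simpa using ⟨hu, hw⟩, by ring⟩

lemma HasOrd16.pow {f : 𝒪} {m : ℕ} (hf : HasOrd16 f m) (k : ℕ) :
    HasOrd16 (f ^ k) (m * k) := by
  obtain ⟨u, hu, rfl⟩ := hf
  exact ⟨u ^ k, by simpa using fun h => absurd h hu, by ring⟩

lemma HasOrd16.coeff_lt {f : 𝒪} {n k : ℕ} (hf : HasOrd16 f n) (hk : k < n) :
    PowerSeries.coeff k f = 0 := by
  obtain ⟨u, hu, rfl⟩ := hf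
  rw [PowerSeries.coeff_X_pow_mul', if_neg (by omega)]

lemma HasOrd16.coeff_self {f : 𝒪} {n : ℕ} (hf : HasOrd16 f n) :
    PowerSeries.coeff n f ≠ 0 := by
  obtain ⟨u, hu, rfl⟩ := hf
  rw [PowerSeries.coeff_X_pow_mul', if_pos le_rfl]
  simpa using hu

lemma HasOrd16.ne_zero {f : 𝒪} {n : ℕ} (hf : HasOrd16 f n) : f ≠ 0 := by
  rintro rfl
  exact hf.coeff_self (by simp)

lemma HasOrd16.ord_eq {f : 𝒪} {n : ℕ} (hf : HasOrd16 f n) : ord f = n := by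
  apply le_antisymm
  · exact Nat.sInf_le hf.coeff_self
  · apply le_csInf ⟨n, hf.coeff_self⟩
    intro k hk
    by_contra h
    exact hk (hf.coeff_lt (by omega))

lemma hasOrd16_ord {f : 𝒪} (hf : f ≠ 0) : HasOrd16 f (ord f) := by
  have hne : {n : ℕ | PowerSeries.coeff n f ≠ 0}.Nonempty := by
    by_contra h
    rw [Set.not_nonempty_iff_eq_empty] at h
    apply hf
    ext n
    by_contra hn
    have : n ∈ {n : ℕ | PowerSeries.coeff n f ≠ 0} := hn
    rw [h] at this
    exact this
  have hmem : PowerSeries.coeff (ord f) f ≠ 0 := Nat.sInf_mem hne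
  have hdvd : (PowerSeries.X : 𝒪)^(ord f) ∣ f := by
    rw [PowerSeries.X_pow_dvd_iff]
    intro m hm
    by_contra h
    exact Nat.notMem_of_lt_sInf hm h
  obtain ⟨u, hu⟩ := hdvd
  refine ⟨u, ?_, hu⟩
  intro h0
  apply hmem
  rw [hu, PowerSeries.coeff_X_pow_mul', if_pos (by rw [← hu])]
  rw [← hu]
  simpa using h0

/-- The second generator. -/
def y16 (v : ℕ) : 𝒪 := (PowerSeries.X : 𝒪)^8 + (PowerSeries.X : 𝒪)^v

/-- The element `y^3 - x^4`. -/
def w16 (v : ℕ) : 𝒪 := y16 v ^ 3 - ((PowerSeries.X : 𝒪)^6)^4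

lemma hasOrd16_x : HasOrd16 ((PowerSeries.X : 𝒪)^6) 6 := ⟨1, by simp, by simp⟩

lemma hasOrd16_y {v : ℕ} (h9 : 9 ≤ v) : HasOrd16 (y16 v) 8 := by
  obtain ⟨t, rfl⟩ := Nat.exists_eq_add_of_le h9
  exact ⟨1 + PowerSeries.X ^ (t + 1), by simp, by unfold y16; ring⟩

lemma hasOrd16_w {v : ℕ} (h9 : 9 ≤ v) : HasOrd16 (w16 v) (v + 16) := by
  obtain ⟨t, rfl⟩ := Nat.exists_eq_add_of_le h9
  refine ⟨3 + 3 * PowerSeries.X ^ (t + 1) + PowerSeries.X ^ (2 * (t + 1)), ?_, ?_⟩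
  · have h3 : (PowerSeries.constantCoeff (3 : 𝒪)) = 3 := map_ofNat _ 3
    simp [h3]
  · unfold w16 y16; ring

/-- The basis elements. -/
def E16 (v : ℕ) (i : ℕ × Fin 3 × Fin 2) : 𝒪 :=
  ((PowerSeries.X : 𝒪)^6) ^ i.1 * y16 v ^ (i.2.1 : ℕ) * w16 v ^ (i.2.2 : ℕ)

/-- The values of the basis elements. -/
def phi16 (v : ℕ) (i : ℕ × Fin 3 × Fin 2) : ℕ :=
  6 * i.1 + 8 * (i.2.1 : ℕ) + (v + 16) * (i.2.2 : ℕ)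

lemma hasOrd16_E {v : ℕ} (h9 : 9 ≤ v) (i) : HasOrd16 (E16 v i) (phi16 v i) :=
  ((hasOrd16_x.pow _).mul ((hasOrd16_y h9).pow _)).mul ((hasOrd16_w h9).pow _)

lemma phi16_inj {v : ℕ} (hv : Odd v) : Function.Injective (phi16 v) := by
  rintro ⟨a, b, c⟩ ⟨a', b', c'⟩ h
  obtain ⟨k, rfl⟩ := hv
  fin_cases b <;> fin_cases b' <;> fin_cases c <;> fin_cases c' <;>
    simp [phi16] at h ⊢ <;> omega

/-- Span of the basis elements plus the conductor ideal. -/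
def W16 (v : ℕ) : Submodule ℂ 𝒪 := Submodule.span ℂ (Set.range (E16 v)) ⊔ zO (v + 27)

lemma E16_mem (v : ℕ) (i) : E16 v i ∈ W16 v :=
  Submodule.mem_sup_left (Submodule.subset_span ⟨i, rfl⟩)

lemma zO16_mem (v : ℕ) (g : 𝒪) : (PowerSeries.X : 𝒪)^(v + 27) * g ∈ W16 v :=
  Submodule.mem_sup_right ⟨g, rfl⟩

lemma W16_mul {v : ℕ} (s : 𝒪) (hs : ∀ i, s * E16 v i ∈ W16 v) {f : 𝒪} (hf : f ∈ W16 v) :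
    s * f ∈ W16 v := by
  have h : W16 v ≤ (W16 v).comap (LinearMap.mulLeft ℂ s) := by
    refine sup_le ?_ ?_
    · rw [Submodule.span_le]
      rintro _ ⟨i, rfl⟩
      exact hs i
    · rintro _ ⟨g, rfl⟩
      have := zO16_mem v (s * g)
      simp only [Submodule.mem_comap, LinearMap.mulLeft_apply]
      convert this using 1
      ring
  exact h hf

lemma W16_x (v : ℕ) (i) : (PowerSeries.X : 𝒪)^6 * E16 v i ∈ W16 v := by
  obtain ⟨a, b, c⟩ := i
  have := E16_mem v (a + 1, b, c)
  convert this using 1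
  simp only [E16]
  ring

lemma W16_y {v : ℕ} (h9 : 9 ≤ v) (i) : y16 v * E16 v i ∈ W16 v := by
  obtain ⟨a, b, c⟩ := i
  have hy : y16 v ^ 3 = ((PowerSeries.X : 𝒪)^6)^4 + w16 v := by unfold w16; ring
  fin_cases b
  · have := E16_mem v (a, 1, c)
    convert this using 1
    simp only [E16]
    simp
    ring
  · have := E16_mem v (a, 2, c)
    convert this using 1
    simp only [E16]
    simp
    ring
  · fin_cases c
    · have := add_mem (E16_mem v (a + 4, 0, 0)) (E16_mem v (a, 0, 1))
      convert this using 1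
      simp only [E16]
      simp
      linear_combination (PowerSeries.X ^ 6) ^ a * hy
    · obtain ⟨u, -, hu⟩ := hasOrd16_w h9
      obtain ⟨t, rfl⟩ := Nat.exists_eq_add_of_le h9
      have := add_mem (E16_mem (9 + t) (a + 4, 0, 1))
        (zO16_mem (9 + t) (PowerSeries.X ^ (t + 14) * (PowerSeries.X ^ 6) ^ a * u ^ 2))
      convert this using 1
      simp only [E16]
      simp
      have hw : w16 (9 + t) ^ 2 = PowerSeries.X ^ (9 + t + 27) * (PowerSeries.X ^ (t + 14) * u ^ 2) := by
        rw [hu]; ring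
      linear_combination (PowerSeries.X ^ 6) ^ a * w16 (9 + t) * hy + (PowerSeries.X ^ 6) ^ a * hw

lemma adjoin_le_W16 {v : ℕ} (h9 : 9 ≤ v) {p : 𝒪} (hp : p ∈ Algebra.adjoin ℂ
      ({(PowerSeries.X : 𝒪)^6, (PowerSeries.X : 𝒪)^8 + (PowerSeries.X : 𝒪)^v} : Set 𝒪)) :
    p ∈ W16 v := by
  rw [← Subalgebra.mem_toSubmodule, Algebra.adjoin_eq_span] at hp
  refine Submodule.span_le.2 ?_ hp
  intro m hm
  induction hm using Submonoid.closure_induction_left with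
  | one =>
    have := E16_mem v (0, 0, 0)
    simpa [E16] using this
  | mul_left s hs f hf ih =>
    rcases hs with rfl | rfl
    · exact W16_mul _ (W16_x v) ih
    · exact W16_mul _ (W16_y h9) ih

lemma big_mem16 {v n : ℕ} (hv : Odd v) (h9 : 9 ≤ v) (hn : v + 27 ≤ n) :
    ∃ a b c : ℕ, n = 6 * a + 8 * b + (v + 16) * c := by
  obtain ⟨k, rfl⟩ := hv
  have key : ∀ m : ℕ, m % 2 = 0 → 12 ≤ m → ∃ a b : ℕ, m = 6 * a + 8 * b := by
    intro m h2 h12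
    have : m % 6 = 0 ∨ m % 6 = 2 ∨ m % 6 = 4 := by omega
    rcases this with h | h | h
    · exact ⟨m / 6, 0, by omega⟩
    · exact ⟨(m - 8) / 6, 1, by omega⟩
    · exact ⟨(m - 16) / 6, 2, by omega⟩
  rcases Nat.mod_two_eq_zero_or_one n with h | h
  · obtain ⟨a, b, hab⟩ := key n h (by omega)
    exact ⟨a, b, 0, by omega⟩
  · obtain ⟨a, b, hab⟩ := key (n - (2 * k + 1 + 16)) (by omega) (by omega)
    exact ⟨a, b, 1, by omega⟩

lemma comb_mem16 (v a b c : ℕ) : 6 * a + 8 * b + (v + 16) * c ∈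
    AddSubmonoid.closure ({6, 8, v+16} : Set ℕ) := by
  have h1 : (6 : ℕ) ∈ AddSubmonoid.closure ({6, 8, v+16} : Set ℕ) :=
    AddSubmonoid.subset_closure (by simp)
  have h2 : (8 : ℕ) ∈ AddSubmonoid.closure ({6, 8, v+16} : Set ℕ) :=
    AddSubmonoid.subset_closure (by simp)
  have h3 : v + 16 ∈ AddSubmonoid.closure ({6, 8, v+16} : Set ℕ) :=
    AddSubmonoid.subset_closure (by simp)
  have := add_mem (add_mem (nsmul_mem h1 a) (nsmul_mem h2 b)) (nsmul_mem h3 c)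
  simpa [mul_comm] using this

lemma W16_ord {v : ℕ} (hv : Odd v) (h9 : 9 ≤ v) {f : 𝒪} (hf : f ∈ W16 v) {n : ℕ}
    (hn : HasOrd16 f n) (hlt : n < v + 27) : ∃ i, n = phi16 v i := by
  obtain ⟨s, hs, _, ⟨g, rfl⟩, rfl⟩ := Submodule.mem_sup.1 hf
  obtain ⟨l, rfl⟩ := (Finsupp.mem_span_range_iff_exists_finsupp).1 hs
  have hc : ∀ k < v + 27, PowerSeries.coeff k
      ((l.sum fun i a => a • E16 v i) + LinearMap.mulLeft ℂ ((PowerSeries.X : 𝒪)^(v+27)) g)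
      = ∑ i ∈ l.support, l i * PowerSeries.coeff k (E16 v i) := by
    intro k hk
    rw [map_add, LinearMap.mulLeft_apply, PowerSeries.coeff_X_pow_mul', if_neg (by omega),
      add_zero, Finsupp.sum, map_sum]
    simp
  have h1 := hn.coeff_self
  rw [hc n hlt] at h1
  obtain ⟨j, hj, hj0⟩ := Finset.exists_ne_zero_of_sum_ne_zero h1
  have hjn : phi16 v j ≤ n := by
    by_contra h
    exact hj0 (by rw [(hasOrd16_E h9 j).coeff_lt (by omega), mul_zero])
  obtain ⟨i, hi, hmin⟩ := Finset.exists_min_image l.support (phi16 v) ⟨j, hj⟩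
  have hin : phi16 v i ≤ n := (hmin j hj).trans hjn
  refine ⟨i, le_antisymm ?_ hin⟩
  by_contra h
  have h2 := hn.coeff_lt (k := phi16 v i) (by omega)
  rw [hc _ (by omega), Finset.sum_eq_single i] at h2
  · exact mul_ne_zero (Finsupp.mem_support_iff.1 hi) (hasOrd16_E h9 i).coeff_self h2
  · intro k hk hki
    have h3 := hmin k hk
    have h4 : phi16 v k ≠ phi16 v i := fun h => hki (phi16_inj hv h)
    rw [(hasOrd16_E h9 k).coeff_lt (by omega), mul_zero]
  · intro h'; exact absurd hi h'

/-- For odd `v ≥ 9`, the value semigroup of `ℛ = ℂ[z^6, z^8+z^v] + z^{v+27}ℂ⟦z⟧`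
is the submonoid of `ℕ` generated by `6`, `8` and `v+16`. -/
theorem statement16 (v : ℕ) (hv : Odd v) (h9 : 9 ≤ v) :
    SGamma (Rring 6 8 v (v+27)) = ↑(AddSubmonoid.closure ({6, 8, v+16} : Set ℕ)) := by
  apply Set.Subset.antisymm
  · rintro n ⟨f, ⟨p, hp, g, hfg⟩, hf0, rfl⟩
    have ho := hasOrd16_ord hf0
    have hW : f ∈ W16 v := by
      rw [hfg]
      exact add_mem (adjoin_le_W16 h9 hp) (zO16_mem v g)
    rw [SetLike.mem_coe]
    by_cases hlt : ord f < v + 27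
    · obtain ⟨i, hi⟩ := W16_ord hv h9 hW ho hlt
      rw [hi]
      exact comb_mem16 v _ _ _
    · obtain ⟨a, b, c, h⟩ := big_mem16 hv h9 (not_lt.1 hlt)
      rw [h]
      exact comb_mem16 v _ _ _
  · have hx : (PowerSeries.X : 𝒪)^6 ∈ Rring 6 8 v (v+27) :=
      ⟨_, Algebra.subset_adjoin (Set.mem_insert _ _), 0, by simp⟩
    have hy : y16 v ∈ Rring 6 8 v (v+27) :=
      ⟨_, Algebra.subset_adjoin (Set.mem_insert_of_mem _ rfl), 0, by simp [y16]⟩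
    have hw : w16 v ∈ Rring 6 8 v (v+27) := sub_mem (pow_mem hy 3) (pow_mem hx 4)
    intro n hn
    rw [SetLike.mem_coe] at hn
    have : ∃ f ∈ Rring 6 8 v (v+27), HasOrd16 f n := by
      induction hn using AddSubmonoid.closure_induction with
      | mem n hn =>
        rcases hn with rfl | rfl | rfl
        · exact ⟨_, hx, hasOrd16_x⟩
        · exact ⟨_, hy, hasOrd16_y h9⟩
        · exact ⟨_, hw, hasOrd16_w h9⟩
      | zero => exact ⟨1, one_mem _, 1, by simp, by simp⟩
      | add m n _ _ ih1 ih2 =>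
        obtain ⟨f, hf, hf'⟩ := ih1
        obtain ⟨g, hg, hg'⟩ := ih2
        exact ⟨f * g, mul_mem hf hg, hf'.mul hg'⟩
    obtain ⟨f, hf, hf'⟩ := this
    exact ⟨f, hf, hf'.ne_zero, hf'.ord_eq⟩

end
end

section
/- Let ℛ = ℂ[z^4, z^6+z^7] + z^{16}ℂ⟦z⟧, whose value semigroup is Γ = ⟨4,6,13⟩ with gap set G = {1,2,3,5,7,9,11,15}. Let D ⊆ G be such that Γ∪D is a Γ-module. Then there exists a standard module 𝓜 with D_𝓜 = D if and only if D ≠ {2,15} and D ≠ {2,11,15}; in particular, the two sets of added gaps {2,15} and {2,11,15} do not come from any module. -/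
open PowerSeries

noncomputable section

lemma ord_spec {f : 𝒪} (hf : f ≠ 0) :
    PowerSeries.coeff (ord f) f ≠ 0 ∧ ∀ m < ord f, PowerSeries.coeff m f = 0 := by
  have hne : {n : ℕ | PowerSeries.coeff n f ≠ 0}.Nonempty := by
    by_contra h
    apply hf
    ext n
    by_contra h'
    exact h ⟨n, by simpa using h'⟩
  refine ⟨Nat.sInf_mem hne, fun m hm => ?_⟩
  by_contra h'
  exact Nat.notMem_of_lt_sInf hm h'

lemma ord_eq {f : 𝒪} {n : ℕ} (h : PowerSeries.coeff n f ≠ 0)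
    (h' : ∀ m < n, PowerSeries.coeff m f = 0) : f ≠ 0 ∧ ord f = n := by
  have hf : f ≠ 0 := by rintro rfl; simp at h
  obtain ⟨h1, h2⟩ := ord_spec hf
  refine ⟨hf, ?_⟩
  rcases lt_trichotomy (ord f) n with hl | he | hg
  · exact absurd (h' _ hl) h1
  · exact he
  · exact absurd (h2 _ hg) h

/-- The parameter in the generator of order two. -/
def pp (D : Set ℕ) : ℂ := by classical exact if 7 ∈ D then -1 else 1

lemma pp_pos {D : Set ℕ} (h : 7 ∈ D) : pp D = -1 := by simp [pp, h]
lemma pp_neg {D : Set ℕ} (h : 7 ∉ D) : pp D = 1 := by simp [pp, h]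

/-- The linear conditions defining the module attached to `D`. -/
structure Cond (D : Set ℕ) (f : 𝒪) : Prop where
  c1 : 1 ∉ D → coeff 1 f = 0
  c2 : 2 ∉ D → coeff 2 f = 0
  c3 : 3 ∉ D → coeff 3 f = pp D * coeff 2 f
  c5 : 5 ∉ D → coeff 5 f = 0
  c7 : 7 ∉ D → coeff 7 f = coeff 6 f
  c9 : 9 ∉ D → coeff 9 f = 0
  c11 : 11 ∉ D → coeff 11 f = coeff 10 f - coeff 9 f / 2
  c15 : 15 ∉ D → coeff 15 f = coeff 14 f - coeff 13 f / 2

/-- The combinatorial conditions on `D`. -/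
structure Good (D : Set ℕ) : Prop where
  g1 : 1 ∈ D → 5 ∈ D ∧ 7 ∈ D
  g2 : 2 ∈ D → 15 ∈ D
  g3 : 3 ∈ D → 7 ∈ D ∧ 9 ∈ D
  g5 : 5 ∈ D → 9 ∈ D ∧ 11 ∈ D
  g7 : 7 ∈ D → 11 ∈ D
  g9 : 9 ∈ D → 15 ∈ D
  g11 : 11 ∈ D → 15 ∈ D

structure RC (f : 𝒪) : Prop where
  c1 : coeff 1 f = 0
  c2 : coeff 2 f = 0
  c3 : coeff 3 f = 0
  c5 : coeff 5 f = 0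
  c7 : coeff 7 f = coeff 6 f
  c9 : coeff 9 f = 0
  c11 : coeff 11 f = coeff 10 f
  c15 : coeff 15 f = coeff 14 f - coeff 13 f / 2

lemma Cond.toRC {f : 𝒪} (h : Cond ∅ f) : RC f := by
  have h2 := h.c2 (by simp)
  have h9 := h.c9 (by simp)
  refine ⟨h.c1 (by simp), h2, ?_, h.c5 (by simp), h.c7 (by simp), h9, ?_, h.c15 (by simp)⟩
  · rw [h.c3 (by simp), h2]; simp
  · rw [h.c11 (by simp), h9]; simp

lemma RC.toCond {f : 𝒪} (h : RC f) : Cond ∅ f := by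
  refine ⟨fun _ => h.c1, fun _ => h.c2, fun _ => ?_, fun _ => h.c5, fun _ => h.c7,
    fun _ => h.c9, fun _ => ?_, fun _ => h.c15⟩
  · rw [h.c3, h.c2]; simp
  · rw [h.c11, h.c9]; simp

set_option maxHeartbeats 1000000 in
lemma cond_mul {D : Set ℕ} (hG : Good D) (h79 : 2 ∈ D → 7 ∈ D ∨ 9 ∈ D) {r f : 𝒪}
    (hr : RC r) (hf : Cond D f) : Cond D (r * f) := by
  obtain ⟨g1, g2, g3, g5, g7, g9, g11⟩ := hG
  obtain ⟨r1, r2, r3, r5, r7, r9, r11, r15⟩ := hr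
  obtain ⟨c1, c2, c3, c5, c7, c9, c11, c15⟩ := hf
  obtain ⟨F, hF⟩ : ∃ F : ℕ → ℂ, ∀ n, coeff n f = F n := ⟨fun n => coeff n f, fun _ => rfl⟩
  obtain ⟨A, hA⟩ : ∃ A : ℕ → ℂ, ∀ n, coeff n r = A n := ⟨fun n => coeff n r, fun _ => rfl⟩
  simp only [hF] at c1 c2 c3 c5 c7 c9 c11 c15
  simp only [hA] at r1 r2 r3 r5 r7 r9 r11 r15
  constructor <;> intro hD <;>
    simp only [PowerSeries.coeff_mul, Finset.Nat.sum_antidiagonal_eq_sum_range_succ_mk,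
      Finset.sum_range_succ, Finset.sum_range_zero, Nat.reduceAdd, Nat.reduceSub, Nat.succ_eq_add_one, Nat.sub_self, Nat.sub_zero, zero_add,
      hF, hA, r1, r2, r3, r5, r7, r9, r11, r15]
  · linear_combination (A 0) * c1 hD
  · linear_combination (A 0) * c2 hD
  · linear_combination (A 0) * c3 hD
  · have h1 : 1 ∉ D := fun h => hD (g1 h).1
    linear_combination (A 0) * c5 hD + A 4 * c1 h1
  · have h1 : 1 ∉ D := fun h => hD (g1 h).2
    have h3 : 3 ∉ D := fun h => hD (g3 h).1
    have e3 := c3 h3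
    rw [pp_neg hD] at e3
    linear_combination (A 0) * c7 hD + A 4 * e3 + A 6 * c1 h1
  · have h1 : 1 ∉ D := fun h => hD (g5 (g1 h).1).1
    have h3 : 3 ∉ D := fun h => hD (g3 h).2
    have h5 : 5 ∉ D := fun h => hD (g5 h).1
    have e3 : F 3 = - F 2 := by
      by_cases h2 : 2 ∈ D
      · rw [c3 h3, pp_pos ((h79 h2).resolve_right hD)]; ring
      · rw [c3 h3, c2 h2]; ring
    linear_combination (A 0) * c9 hD + A 4 * c5 h5 + A 6 * e3 + A 8 * c1 h1
  · have h1 : 1 ∉ D := fun h => hD (g7 (g1 h).2)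
    have h3 : 3 ∉ D := fun h => hD (g7 (g3 h).1)
    have h5 : 5 ∉ D := fun h => hD (g5 h).2
    have h7 : 7 ∉ D := fun h => hD (g7 h)
    have e3 := c3 h3
    rw [pp_neg h7] at e3
    linear_combination (A 0) * c11 hD + A 4 * c7 h7 + (A 4 / 2 + A 6) * c5 h5
      + (A 8 - A 6 / 2) * e3 + (A 10 + A 8 / 2) * c1 h1
  · have h1 : 1 ∉ D := fun h => hD (g11 (g7 (g1 h).2))
    have h2 : 2 ∉ D := fun h => hD (g2 h)
    have h3 : 3 ∉ D := fun h => hD (g9 (g3 h).2)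
    have h5 : 5 ∉ D := fun h => hD (g9 (g5 h).1)
    have h7 : 7 ∉ D := fun h => hD (g11 (g7 h))
    have h9 : 9 ∉ D := fun h => hD (g9 h)
    have h11 : 11 ∉ D := fun h => hD (g11 h)
    have e3 : F 3 = 0 := by rw [c3 h3, c2 h2]; ring
    have e11 := c11 h11
    rw [c9 h9] at e11
    rw [c15 hD, e11, c9 h9, c7 h7, c5 h5, e3, c2 h2, c1 h1]
    ring

lemma good_empty : Good ∅ := by constructor <;> simp

/-- The ring defined by conditions. -/
def RA : Subalgebra ℂ 𝒪 where
  carrier := {f | RC f}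
  mul_mem' := fun {a b} ha hb => (cond_mul good_empty (by simp) ha hb.toCond).toRC
  one_mem' := by constructor <;> simp [PowerSeries.coeff_one]
  add_mem' := by
    rintro a b ⟨a1, a2, a3, a5, a7, a9, a11, a15⟩ ⟨b1, b2, b3, b5, b7, b9, b11, b15⟩
    constructor <;> simp only [map_add, *] <;> ring
  zero_mem' := by constructor <;> simp
  algebraMap_mem' := fun r => by
    constructor <;> simp [PowerSeries.algebraMap_apply, PowerSeries.coeff_C]

abbrev R0 : Subalgebra ℂ 𝒪 := Rring 4 6 7 16

lemma coeff_high (g : 𝒪) (n : ℕ) (h : n < 16) : coeff n ((X : 𝒪) ^ 16 * g) = 0 := by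
  rw [PowerSeries.coeff_X_pow_mul']; simp [h]

lemma RC_of_mem {f : 𝒪} (hf : f ∈ R0) : RC f := by
  obtain ⟨p, hp, g, rfl⟩ := hf
  have hle : Algebra.adjoin ℂ ({(X : 𝒪) ^ 4, (X : 𝒪) ^ 6 + (X : 𝒪) ^ 7} : Set 𝒪) ≤ RA := by
    apply Algebra.adjoin_le
    rintro x (rfl | rfl)
    · constructor <;> simp [PowerSeries.coeff_X_pow]
    · constructor <;> simp [PowerSeries.coeff_X_pow]
  refine RA.add_mem (hle hp) ?_
  constructor <;> simp [coeff_high]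

lemma mem_high (g : 𝒪) : (X : 𝒪) ^ 16 * g ∈ R0 := ⟨0, zero_mem _, g, by ring⟩

lemma high_of_coeff {f : 𝒪} (h : ∀ n < 16, coeff n f = 0) : ∃ g, f = (X : 𝒪) ^ 16 * g :=
  PowerSeries.X_pow_dvd_iff.2 h

lemma a_mem : (X : 𝒪) ^ 4 ∈ R0 :=
  ⟨(X : 𝒪) ^ 4, Algebra.subset_adjoin (by simp), 0, by ring⟩

lemma b_mem : (X : 𝒪) ^ 6 + (X : 𝒪) ^ 7 ∈ R0 :=
  ⟨(X : 𝒪) ^ 6 + (X : 𝒪) ^ 7, Algebra.subset_adjoin (by simp), 0, by ring⟩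

lemma semigroup_mem {n : ℕ} (h : n ≠ 1 ∧ n ≠ 2 ∧ n ≠ 3 ∧ n ≠ 5 ∧ n ≠ 7 ∧ n ≠ 9 ∧ n ≠ 11 ∧ n ≠ 15) :
    n ∈ SGamma R0 := by
  have ha := a_mem
  have hb := b_mem
  have key : ∀ f ∈ R0, coeff n f ≠ 0 → (∀ m < n, coeff m f = 0) → n ∈ SGamma R0 :=
    fun f hf h1 h2 => ⟨f, hf, ord_eq h1 h2⟩
  by_cases hn : 16 ≤ n
  · refine key ((X : 𝒪) ^ 16 * X ^ (n - 16)) (mem_high _) ?_ ?_ <;> rw [← pow_add]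
    · rw [PowerSeries.coeff_X_pow]; simp; omega
    · intro m hm
      rw [PowerSeries.coeff_X_pow, if_neg (by omega)]
  have hn' : n = 0 ∨ n = 4 ∨ n = 6 ∨ n = 8 ∨ n = 10 ∨ n = 12 ∨ n = 13 ∨ n = 14 := by omega
  rcases hn' with rfl | rfl | rfl | rfl | rfl | rfl | rfl | rfl
  · exact key 1 (one_mem _) (by simp) (by simp)
  · exact key _ ha (by simp [PowerSeries.coeff_X_pow])
      (fun m hm => by rw [PowerSeries.coeff_X_pow, if_neg (by omega)])
  · refine key _ hb (by simp [PowerSeries.coeff_X_pow]) (fun m hm => ?_)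
    rw [map_add, PowerSeries.coeff_X_pow, PowerSeries.coeff_X_pow, if_neg (by omega),
      if_neg (by omega), add_zero]
  · refine key _ (mul_mem ha ha) ?_ ?_ <;> rw [← pow_add]
    · simp [PowerSeries.coeff_X_pow]
    · intro m hm
      rw [PowerSeries.coeff_X_pow, if_neg (by omega)]
  · have e : (X : 𝒪) ^ 4 * (X ^ 6 + X ^ 7) = X ^ 10 + X ^ 11 := by ring
    refine key _ (mul_mem ha hb) ?_ ?_ <;> rw [e]
    · simp [PowerSeries.coeff_X_pow]
    · intro m hm
      rw [map_add, PowerSeries.coeff_X_pow, PowerSeries.coeff_X_pow, if_neg (by omega),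
        if_neg (by omega), add_zero]
  · refine key _ (pow_mem ha 3) ?_ ?_ <;> rw [← pow_mul]
    · simp [PowerSeries.coeff_X_pow]
    · intro m hm
      rw [PowerSeries.coeff_X_pow, if_neg (by omega)]
  · have e : ((X : 𝒪) ^ 6 + X ^ 7) ^ 2 - (X ^ 4) ^ 3 = X ^ 13 + X ^ 13 + X ^ 14 := by ring
    refine key _ (sub_mem (pow_mem hb 2) (pow_mem ha 3)) ?_ ?_ <;> rw [e]
    · simp [PowerSeries.coeff_X_pow]
    · intro m hm
      rw [map_add, map_add, PowerSeries.coeff_X_pow, PowerSeries.coeff_X_pow, if_neg (by omega),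
        if_neg (by omega), add_zero, add_zero]
  · have e : ((X : 𝒪) ^ 4) ^ 2 * (X ^ 6 + X ^ 7) = X ^ 14 + X ^ 15 := by ring
    refine key _ (mul_mem (pow_mem ha 2) hb) ?_ ?_ <;> rw [e]
    · simp [PowerSeries.coeff_X_pow]
    · intro m hm
      rw [map_add, PowerSeries.coeff_X_pow, PowerSeries.coeff_X_pow, if_neg (by omega),
        if_neg (by omega), add_zero]

lemma semigroup_iff {n : ℕ} :
    n ∈ SGamma R0 ↔ (n ≠ 1 ∧ n ≠ 2 ∧ n ≠ 3 ∧ n ≠ 5 ∧ n ≠ 7 ∧ n ≠ 9 ∧ n ≠ 11 ∧ n ≠ 15) := by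
  refine ⟨?_, semigroup_mem⟩
  rintro ⟨f, hf, h0, rfl⟩
  obtain ⟨h1, h2⟩ := ord_spec h0
  obtain ⟨r1, r2, r3, r5, r7, r9, r11, r15⟩ := RC_of_mem hf
  refine ⟨?_, ?_, ?_, ?_, ?_, ?_, ?_, ?_⟩ <;> intro h <;> rw [h] at h1 h2 <;> apply h1
  · exact r1
  · exact r2
  · exact r3
  · exact r5
  · rw [r7, h2 6 (by norm_num)]
  · exact r9
  · rw [r11, h2 10 (by norm_num)]
  · rw [r15, h2 14 (by norm_num), h2 13 (by norm_num)]; simp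

lemma mem_gaps_iff {n : ℕ} :
    n ∈ Gaps R0 ↔ (n = 1 ∨ n = 2 ∨ n = 3 ∨ n = 5 ∨ n = 7 ∨ n = 9 ∨ n = 11 ∨ n = 15) := by
  rw [Gaps, Set.mem_compl_iff, semigroup_iff]
  tauto

lemma good_of_module {D : Set ℕ} (hmod : IsGammaModule (SGamma R0) (SGamma R0 ∪ D)) : Good D := by
  have key : ∀ a d, a ∈ SGamma R0 → a + d ∉ SGamma R0 → d ∈ D → a + d ∈ D := fun a d ha hn hd =>
    (hmod a ha d (Or.inr hd)).resolve_left hn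
  simp only [semigroup_iff] at key
  refine ⟨fun h => ⟨?_, ?_⟩, fun h => ?_, fun h => ⟨?_, ?_⟩, fun h => ⟨?_, ?_⟩, fun h => ?_,
    fun h => ?_, fun h => ?_⟩
  · exact key 4 1 (by norm_num) (by norm_num) h
  · exact key 6 1 (by norm_num) (by norm_num) h
  · exact key 13 2 (by norm_num) (by norm_num) h
  · exact key 4 3 (by norm_num) (by norm_num) h
  · exact key 6 3 (by norm_num) (by norm_num) h
  · exact key 4 5 (by norm_num) (by norm_num) h
  · exact key 6 5 (by norm_num) (by norm_num) h
  · exact key 4 7 (by norm_num) (by norm_num) h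
  · exact key 6 9 (by norm_num) (by norm_num) h
  · exact key 4 11 (by norm_num) (by norm_num) h

/-- The module attached to `D`. -/
def MD (D : Set ℕ) (hG : Good D) (h79 : 2 ∈ D → 7 ∈ D ∨ 9 ∈ D) : Submodule ↥R0 𝒪 where
  carrier := {f | Cond D f}
  add_mem' := by
    rintro a b ha hb
    constructor <;> intro h
    · simp [ha.c1 h, hb.c1 h]
    · simp [ha.c2 h, hb.c2 h]
    · simp only [map_add, ha.c3 h, hb.c3 h]; ring
    · simp [ha.c5 h, hb.c5 h]
    · simp [ha.c7 h, hb.c7 h]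
    · simp [ha.c9 h, hb.c9 h]
    · simp only [map_add, ha.c11 h, hb.c11 h]; ring
    · simp only [map_add, ha.c15 h, hb.c15 h]; ring
  zero_mem' := by constructor <;> simp
  smul_mem' := fun r f hf => cond_mul hG h79 (RC_of_mem r.2) hf

lemma fg_of_one_mem (M : Submodule ↥R0 𝒪) (h1 : (1 : 𝒪) ∈ M) : M.FG := by
  classical
  let T : 𝒪 →ₗ[ℂ] (Fin 16 → ℂ) := LinearMap.pi fun i => PowerSeries.coeff (i : ℕ)
  have hfg : ((M.restrictScalars ℂ).map T).FG := IsNoetherian.noetherian _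
  obtain ⟨S, hS⟩ := hfg
  have hsub : (S : Set (Fin 16 → ℂ)) ⊆ Set.image T (M : Set 𝒪) := by
    intro s hs
    have : s ∈ (M.restrictScalars ℂ).map T := hS ▸ Submodule.subset_span hs
    simpa using this
  obtain ⟨Sf, hSf, rfl⟩ := Finset.subset_set_image_iff.1 hsub
  refine ⟨insert 1 Sf, le_antisymm (Submodule.span_le.2 ?_) ?_⟩
  · intro x hx
    rcases Finset.mem_insert.1 (Finset.mem_coe.1 hx) with rfl | hx
    · exact h1
    · exact hSf hx
  · intro x hx
    have hTx : T x ∈ Submodule.span ℂ (Set.image T (Sf : Set 𝒪)) := by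
      rw [← Finset.coe_image, hS]
      exact ⟨x, hx, rfl⟩
    rw [← Submodule.map_span] at hTx
    obtain ⟨y, hy, hyx⟩ := hTx
    have hy' : y ∈ Submodule.span ↥R0 ((insert 1 Sf : Finset 𝒪) : Set 𝒪) := by
      have h2 := Submodule.span_le_restrictScalars ℂ ↥R0 (Sf : Set 𝒪) hy
      exact Submodule.span_mono (by simp) h2
    obtain ⟨g, hg⟩ := high_of_coeff (f := x - y) (by
      intro n hn
      have := congrFun hyx ⟨n, hn⟩
      simp only [T, LinearMap.pi_apply] at this
      rw [map_sub, this, sub_self])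
    have h3 : x - y ∈ Submodule.span ↥R0 ((insert 1 Sf : Finset 𝒪) : Set 𝒪) := by
      have h4 := Submodule.smul_mem (Submodule.span ↥R0 ((insert 1 Sf : Finset 𝒪) : Set 𝒪))
        (⟨_, mem_high g⟩ : ↥R0) (Submodule.subset_span (by simp : (1 : 𝒪) ∈ _))
      rw [hg]
      simpa [Subalgebra.smul_def] using h4
    have := add_mem h3 hy'
    simpa using this

lemma std_MD (D : Set ℕ) (hG : Good D) (h79 : 2 ∈ D → 7 ∈ D ∨ 9 ∈ D) : IsStd R0 (MD D hG h79) := by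
  have h1 : (1 : 𝒪) ∈ MD D hG h79 := by
    constructor <;> simp [PowerSeries.coeff_one]
  exact ⟨fg_of_one_mem _ h1, 1, h1, ord_eq (by simp) (by simp)⟩

lemma dset_MD (D : Set ℕ) (hG : Good D) (h79 : 2 ∈ D → 7 ∈ D ∨ 9 ∈ D) (hD : D ⊆ Gaps R0) :
    Dset R0 (MD D hG h79) = D := by
  apply Set.Subset.antisymm
  · rintro n ⟨⟨f, hf, h0, rfl⟩, hn⟩
    obtain ⟨h1, h2⟩ := ord_spec h0
    have hf : Cond D f := hf
    by_contra hnD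
    rw [mem_gaps_iff] at hn
    rcases hn with h | h | h | h | h | h | h | h <;> rw [h] at h1 h2 hnD <;> apply h1
    · exact hf.c1 hnD
    · exact hf.c2 hnD
    · rw [hf.c3 hnD, h2 2 (by norm_num), mul_zero]
    · exact hf.c5 hnD
    · rw [hf.c7 hnD, h2 6 (by norm_num)]
    · exact hf.c9 hnD
    · rw [hf.c11 hnD, h2 10 (by norm_num), h2 9 (by norm_num)]; simp
    · rw [hf.c15 hnD, h2 14 (by norm_num), h2 13 (by norm_num)]; simp
  · intro n hn
    refine ⟨?_, hD hn⟩
    have key : ∀ (k : ℕ) (c : ℂ), n < k → Cond D (X ^ n + PowerSeries.C c * X ^ k) →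
        n ∈ DeltaM R0 (MD D hG h79) := by
      intro k c hk hc
      refine ⟨_, hc, ord_eq ?_ ?_⟩
      · simp [PowerSeries.coeff_X_pow, hk.ne]
      · intro m hm
        simp [PowerSeries.coeff_X_pow, hm.ne, (hm.trans hk).ne]
    have hg := mem_gaps_iff.1 (hD hn)
    rcases hg with rfl | rfl | rfl | rfl | rfl | rfl | rfl | rfl
    · apply key 16 0 (by norm_num)
      constructor <;> simp +contextual [PowerSeries.coeff_X, hn]
    · apply key 3 (pp D) (by norm_num)
      constructor <;> simp +contextual [PowerSeries.coeff_X_pow, hn]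
    · apply key 16 0 (by norm_num)
      constructor <;> simp +contextual [PowerSeries.coeff_X_pow, hn]
    · apply key 16 0 (by norm_num)
      constructor <;> simp +contextual [PowerSeries.coeff_X_pow, hn]
    · apply key 16 0 (by norm_num)
      constructor <;> simp +contextual [PowerSeries.coeff_X_pow, hn]
    · apply key 10 (1/2) (by norm_num)
      constructor <;> simp +contextual [PowerSeries.coeff_X_pow, hn]
    · apply key 16 0 (by norm_num)
      constructor <;> simp +contextual [PowerSeries.coeff_X_pow, hn]
    · apply key 16 0 (by norm_num)
      constructor <;> simp +contextual [PowerSeries.coeff_X_pow, hn]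

lemma obstruct (M : Submodule ↥R0 𝒪) (hM : IsStd R0 M) (h2 : 2 ∈ Dset R0 M) :
    7 ∈ Dset R0 M ∨ 9 ∈ Dset R0 M := by
  by_contra! hcon
  obtain ⟨h7, h9⟩ := hcon
  obtain ⟨-, u, hu, hu0, huo⟩ := hM
  obtain ⟨⟨f, hf, hf0, hfo⟩, -⟩ := h2
  obtain ⟨u1, -⟩ := ord_spec hu0
  obtain ⟨f1, f2⟩ := ord_spec hf0
  rw [huo] at u1
  rw [hfo] at f1 f2
  have fz := f2 0 (by norm_num)
  have fo := f2 1 (by norm_num)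
  have hmul : ∀ r ∈ R0, ∀ x ∈ M, r * x ∈ M := fun r hr x hx => M.smul_mem ⟨r, hr⟩ hx
  have hC : ∀ c : ℂ, (PowerSeries.C c : 𝒪) ∈ R0 := fun c => R0.algebraMap_mem c
  have h7' : ∀ x ∈ M, (∀ m < 7, coeff m x = 0) → coeff 7 x = 0 := by
    intro x hx hm
    by_contra h
    exact h7 ⟨⟨x, hx, ord_eq h hm⟩, mem_gaps_iff.2 (by norm_num)⟩
  have h9' : ∀ x ∈ M, (∀ m < 9, coeff m x = 0) → coeff 9 x = 0 := by
    intro x hx hm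
    by_contra h
    exact h9 ⟨⟨x, hx, ord_eq h hm⟩, mem_gaps_iff.2 (by norm_num)⟩
  have e1 := h7' _ (M.sub_mem (hmul _ (hC (coeff 0 u)) _ (hmul _ a_mem f hf))
    (hmul _ (hC (coeff 2 f)) _ (hmul _ b_mem u hu))) (by
      intro m hm
      interval_cases m <;> simp [add_mul, PowerSeries.coeff_X_pow_mul', fz, fo]
      ring)
  have e2 := h9' _ (M.sub_mem (hmul _ (hC (coeff 0 u)) _ (hmul _ b_mem f hf))
    (hmul _ (hC (coeff 2 f)) _ (hmul _ (pow_mem a_mem 2) u hu))) (by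
      intro m hm
      rw [← pow_mul]
      interval_cases m <;> simp [add_mul, PowerSeries.coeff_X_pow_mul', fz, fo]
      ring)
  rw [← pow_mul] at e2
  simp [add_mul, PowerSeries.coeff_X_pow_mul'] at e1 e2
  have : coeff 0 u * coeff 2 f = 0 := by
    simp only [PowerSeries.coeff_zero_eq_constantCoeff]
    linear_combination (e2 - e1) / 2
  rcases mul_eq_zero.1 this with h | h
  · exact u1 h
  · exact f1 h

/-- For `ℛ = ℂ[z^4, z^6+z^7] + z^{16}ℂ⟦z⟧` (value semigroup `⟨4,6,13⟩`): a set
`D ⊆ G` with `Γ ∪ D` a `Γ`-module is the `D`-set of a standard module iff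
`D ≠ {2,15}` and `D ≠ {2,11,15}`. -/
theorem statement17 (D : Set ℕ) (hD : D ⊆ Gaps (Rring 4 6 7 16))
    (hmod : IsGammaModule (SGamma (Rring 4 6 7 16)) (SGamma (Rring 4 6 7 16) ∪ D)) :
    (∃ M : Submodule ↥(Rring 4 6 7 16) 𝒪,
        IsStd (Rring 4 6 7 16) M ∧ Dset (Rring 4 6 7 16) M = D) ↔
      (D ≠ ({2, 15} : Set ℕ) ∧ D ≠ ({2, 11, 15} : Set ℕ)) := by
  have hG : Good D := good_of_module hmod
  constructor
  · rintro ⟨M, hM, rfl⟩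
    have ho := obstruct M hM
    constructor <;> intro h <;> rw [h] at ho <;> simp at ho
  · rintro ⟨n1, n2⟩
    have h79 : 2 ∈ D → 7 ∈ D ∨ 9 ∈ D := by
      intro h2
      by_contra! hcon
      obtain ⟨h7, h9⟩ := hcon
      have h1 : 1 ∉ D := fun h => h7 (hG.g1 h).2
      have h3 : 3 ∉ D := fun h => h7 (hG.g3 h).1
      have h5 : 5 ∉ D := fun h => h9 (hG.g5 h).1
      have h15 := hG.g2 h2
      by_cases h11 : 11 ∈ D
      · apply n2
        ext n
        simp only [Set.mem_insert_iff, Set.mem_singleton_iff]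
        constructor
        · intro hn
          have := mem_gaps_iff.1 (hD hn)
          rcases this with rfl | rfl | rfl | rfl | rfl | rfl | rfl | rfl <;> simp_all
        · rintro (rfl | rfl | rfl) <;> assumption
      · apply n1
        ext n
        simp only [Set.mem_insert_iff, Set.mem_singleton_iff]
        constructor
        · intro hn
          have := mem_gaps_iff.1 (hD hn)
          rcases this with rfl | rfl | rfl | rfl | rfl | rfl | rfl | rfl <;> simp_all
        · rintro (rfl | rfl) <;> assumption
    exact ⟨MD D hG h79, std_MD D hG h79, dset_MD D hG h79 hD⟩

end
end
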